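/- With b(n,k) defined by A_n(x) = Σ_{k=0}^n b(n,k)(x−1)^k, for all n ≥ 1 and 0 ≤ k ≤ n one has the closed form b(n,k) = ((k+1)/(n+1))·binom(2n−k, n). -/

import Mathlib

/-!
Reading a `321`-avoiding permutation from left to right, every entry is either a new maximum or
the smallest value not yet used. So the only information needed about a prefix is the number `j`
of unused values below the current maximum. What remains after the prefix is, up to relabelling,
a `321`-avoiding permutation in which the values `0, …, j - 1` appear in increasing order
(`Good j`), and the fixed points still to come are those at positions `≥ j`, because no entry
before a fixed point of a `321`-avoiding permutation exceeds it (`no_early_fixed`).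

Let `P j n` be the enumerator of `Good j` permutations of `Fin n` by fixed points `≥ j`, so that
`P 0 n = APoly n`. Deleting the first entry `v` (`v = 0 < j`, or `v ≥ j`) gives
`P j (n+1) = [j ≥ 1] P (j-1) n + ∑_{v=j}^{n} x^{[v = 0]} P v n`, and taking differences in `j`,
* `P j (n+1) = P (j+1) (n+1) + P (j-1) n` for `1 ≤ j ≤ n`,
* `P 0 (n+1) = P 1 (n+1) + (x-1) P 0 n`.

The ballot numbers `N k n = (k+1)/(n+1) * binom(2n-k, n)` satisfy
`N (k+1) (n+1) = N (k+2) (n+1) + N k n` and `N 0 (n+1) = N 1 (n+1)`, so by induction the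
coefficient of `(x-1)^k` in `P j n` is `N (j+k) n` for all `j ≤ n`. The case `j = 0` is the claim.
-/

open Finset Polynomial

/-- `π` contains the pattern `α`: there are indices `i₁ < ⋯ < i_m` whose images under `π`
are in the same relative order as the values of `α`. -/
def ContainsPat {n m : ℕ} (π : Equiv.Perm (Fin n)) (α : Fin m → Fin m) : Prop :=
  ∃ f : Fin m → Fin n, StrictMono f ∧ ∀ a b, π (f a) < π (f b) ↔ α a < α b

/-- `π` avoids the pattern `α`. -/
def AvoidsPat {n m : ℕ} (π : Equiv.Perm (Fin n)) (α : Fin m → Fin m) : Prop :=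
  ¬ ContainsPat π α

/-- Number of fixed points of a permutation. -/
noncomputable def fpCount {n : ℕ} (π : Equiv.Perm (Fin n)) : ℕ :=
  Nat.card {i : Fin n // π i = i}

open Classical in
/-- `APoly n` = weight enumerator of `321`-avoiding permutations of `{1,…,n}` by number
of fixed points. -/
noncomputable def APoly (n : ℕ) : Polynomial ℤ :=
  ∑ π : Equiv.Perm (Fin n),
    if AvoidsPat π ![2, 1, 0] then (Polynomial.X : Polynomial ℤ) ^ fpCount π else 0

/-- `bCoef n k` : the coefficients in the expansion `APoly n = ∑ₖ bCoef n k * (x-1)^k`. -/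
noncomputable def bCoef (n k : ℕ) : ℤ :=
  ((APoly n).comp (Polynomial.X + 1)).coeff k

namespace FixedPoints321

/-! ### Deleting the first entry of a permutation -/

/-- The permutation of `Fin (n+1)` whose first entry is `v` and whose remaining entries are in the
same relative order as those of `σ`. -/
def prependPerm {n : ℕ} (v : Fin (n + 1)) (σ : Equiv.Perm (Fin n)) : Equiv.Perm (Fin (n + 1)) :=
  ((finSuccEquiv' 0).trans (Equiv.optionCongr σ)).trans (finSuccEquiv' v).symm

@[simp] lemma prependPerm_zero {n : ℕ} (v : Fin (n + 1)) (σ : Equiv.Perm (Fin n)) :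
    prependPerm v σ 0 = v := by
  simp [prependPerm]

@[simp] lemma prependPerm_succ {n : ℕ} (v : Fin (n + 1)) (σ : Equiv.Perm (Fin n)) (i : Fin n) :
    prependPerm v σ i.succ = v.succAbove (σ i) := by
  have h : finSuccEquiv' (0 : Fin (n + 1)) i.succ = some i := by
    rw [← Fin.succAbove_zero]; exact finSuccEquiv'_succAbove 0 i
  simp [prependPerm, h]

lemma prependPerm_bijective (n : ℕ) :
    Function.Bijective (fun p : Fin (n + 1) × Equiv.Perm (Fin n) => prependPerm p.1 p.2) := by
  rw [Fintype.bijective_iff_injective_and_card]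
  constructor
  · rintro ⟨v, σ⟩ ⟨w, τ⟩ h
    have h0 : v = w := by simpa using congrArg (fun π => π 0) h
    subst h0
    have hs : σ = τ := by
      ext i : 1
      have := congrArg (fun π => π i.succ) h
      simpa using this
    rw [hs]
  · simp [Fintype.card_perm, Nat.factorial_succ]

lemma sum_perm_succ {n : ℕ} (F : Equiv.Perm (Fin (n + 1)) → ℤ[X]) :
    ∑ π, F π = ∑ v : Fin (n + 1), ∑ σ : Equiv.Perm (Fin n), F (prependPerm v σ) := by
  rw [← Fintype.sum_prod_type']
  exact ((prependPerm_bijective n).sum_comp F).symm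

/-! ### Effect on the pattern condition and on fixed points -/

/-- `π` avoids `321` and its values smaller than `j` appear in increasing order. -/
def Good {n : ℕ} (j : ℕ) (π : Equiv.Perm (Fin n)) : Prop :=
  (∀ a b c, a < b → b < c → π b < π a → π c < π b → False) ∧
  (∀ a b, a < b → π b < π a → (π a : ℕ) < j → False)

/-- Number of fixed points `i ≥ j` of `π`. -/
def fpFrom {n : ℕ} (j : ℕ) (π : Equiv.Perm (Fin n)) : ℕ :=
  ∑ i : Fin n, if π i = i ∧ j ≤ (i : ℕ) then 1 else 0

lemma succAbove_lt {n : ℕ} (v : Fin (n + 1)) (a b : Fin n) :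
    v.succAbove a < v.succAbove b ↔ a < b :=
  (Fin.strictMono_succAbove v).lt_iff_lt

lemma succAbove_val {n : ℕ} (v : Fin (n + 1)) (a : Fin n) :
    (v.succAbove a : ℕ) = if (a : ℕ) < v then (a : ℕ) else a + 1 := by
  simp only [Fin.succAbove, Fin.lt_def, Fin.val_castSucc]
  split_ifs <;> simp

lemma good_prepend_zero {n : ℕ} (j : ℕ) (σ : Equiv.Perm (Fin n)) :
    Good (j + 1) (prependPerm 0 σ) ↔ Good j σ := by
  constructor
  · rintro ⟨h1, h2⟩
    refine ⟨fun a b c hab hbc h h' => h1 a.succ b.succ c.succ ?_ ?_ ?_ ?_,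
      fun a b hab h h' => h2 a.succ b.succ ?_ ?_ ?_⟩ <;> simpa
  · rintro ⟨h1, h2⟩
    constructor
    · intro a b c
      refine Fin.cases ?_ (fun a => ?_) a
      · simp
      · refine Fin.cases ?_ (fun b => ?_) b
        · simp
        · refine Fin.cases ?_ (fun c => ?_) c
          · simp
          · simpa using h1 a b c
    · intro a b
      refine Fin.cases ?_ (fun a => ?_) a
      · simp
      · refine Fin.cases ?_ (fun b => ?_) b
        · simp
        · simpa using h2 a b

/-- A `321` pattern starting with the first entry `v` is exactly an inversion among later values
below `v`. -/
lemma good_prepend_ge {n : ℕ} (j : ℕ) (v : Fin (n + 1)) (hv : j ≤ (v : ℕ))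
    (σ : Equiv.Perm (Fin n)) :
    Good j (prependPerm v σ) ↔ Good v σ := by
  constructor
  · rintro ⟨h1, h2⟩
    constructor
    · intro a b c hab hbc h h'
      exact h1 a.succ b.succ c.succ (by simpa) (by simpa) (by simpa [succAbove_lt])
        (by simpa [succAbove_lt])
    · intro a b hab h h'
      refine h1 0 a.succ b.succ (by simp) (by simpa) ?_ (by simpa [succAbove_lt])
      simp only [prependPerm_zero, prependPerm_succ, Fin.lt_def, succAbove_val, if_pos h']
      exact h'
  · rintro ⟨h1, h2⟩
    constructor
    · intro a b c
      refine Fin.cases ?_ (fun b => ?_) b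
      · simp
      refine Fin.cases ?_ (fun c => ?_) c
      · simp
      refine Fin.cases ?_ (fun a => ?_) a
      · intro _ hbc h h'
        simp only [prependPerm_zero, prependPerm_succ, succAbove_lt] at h h'
        refine h2 b c (by simpa using hbc) h' ?_
        rw [Fin.lt_def, succAbove_val] at h
        split_ifs at h <;> omega
      · simpa [succAbove_lt] using h1 a b c
    · intro a b
      refine Fin.cases ?_ (fun b => ?_) b
      · simp
      refine Fin.cases ?_ (fun a => ?_) a
      · intro _ _ h
        simp only [prependPerm_zero] at h
        omega
      · intro hab h h'
        simp only [prependPerm_succ, succAbove_lt] at h h'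
        refine h2 a b (by simpa using hab) h ?_
        rw [succAbove_val] at h'
        split_ifs at h' <;> omega

/-- A nonzero first entry `v < j` precedes the value `0`, so the values below `j` are not in
increasing order. -/
lemma not_good_prepend {n : ℕ} (j : ℕ) (v : Fin (n + 1)) (hv : (v : ℕ) < j) (hv0 : v ≠ 0)
    (σ : Equiv.Perm (Fin n)) : ¬ Good j (prependPerm v σ) := by
  rintro ⟨-, h2⟩
  have hne : (prependPerm v σ).symm 0 ≠ 0 := by
    intro h
    rw [Equiv.symm_apply_eq] at h
    exact hv0 (by simpa using h.symm)
  refine h2 0 ((prependPerm v σ).symm 0) (Fin.pos_of_ne_zero hne) ?_ ?_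
  · simpa using Fin.pos_of_ne_zero hv0
  · simpa using hv

/-- In a `321`-avoiding permutation no entry to the left of a fixed point exceeds it: a larger
entry on the left would force a smaller one on the right. -/
lemma no_early_fixed {n : ℕ} (π : Equiv.Perm (Fin n)) (h : Good 0 π) (a i : Fin n) (hai : a < i)
    (hi : π i = i) (ha : i < π a) : False := by
  have hsub : (Finset.Iio i).map π.symm.toEmbedding ⊆ Finset.Iio i := by
    intro c hc
    simp only [Finset.mem_map_equiv, Equiv.symm_symm, Finset.mem_Iio] at hc ⊢
    by_contra hci
    rcases lt_or_eq_of_le (not_lt.1 hci) with hlt | heq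
    · exact h.1 a i c hai hlt (by rwa [hi]) (by rwa [hi])
    · rw [← heq, hi] at hc
      exact lt_irrefl _ hc
  -- so `π⁻¹` permutes the values below `i`, whereas `a` is below `i` and `π a` is not
  have heq := Finset.eq_of_subset_of_card_le hsub (by simp)
  have hm : a ∈ (Finset.Iio i).map π.symm.toEmbedding := by
    rw [heq]; simpa using hai
  simp only [Finset.mem_map_equiv, Equiv.symm_symm, Finset.mem_Iio] at hm
  exact lt_asymm hm ha

lemma Good.zero {n j : ℕ} {π : Equiv.Perm (Fin n)} (h : Good j π) : Good 0 π :=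
  ⟨h.1, by simp⟩

lemma fpFrom_prepend_zero {n : ℕ} (j : ℕ) (σ : Equiv.Perm (Fin n)) :
    fpFrom (j + 1) (prependPerm 0 σ) = fpFrom j σ := by
  unfold fpFrom
  rw [Fin.sum_univ_succ]
  simp only [prependPerm_zero, prependPerm_succ, Fin.succAbove_zero, Fin.succ_inj, Fin.val_zero,
    Fin.val_succ, Nat.add_le_add_iff_right]
  simp only [Nat.not_add_one_le_zero, and_false, if_false, zero_add]

lemma fpFrom_prepend_ge {n : ℕ} (j : ℕ) (v : Fin (n + 1)) (hv : j ≤ (v : ℕ))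
    (σ : Equiv.Perm (Fin n)) (h : Good j (prependPerm v σ)) :
    fpFrom j (prependPerm v σ) = (if v = 0 then 1 else 0) + fpFrom v σ := by
  unfold fpFrom
  rw [Fin.sum_univ_succ]
  congr 1
  · simp only [prependPerm_zero, Fin.val_zero]
    refine if_congr ⟨fun h => h.1, fun h => ⟨h, ?_⟩⟩ rfl rfl
    subst h; simpa using hv
  · refine Finset.sum_congr rfl fun i _ => if_congr ?_ rfl rfl
    constructor
    · rintro ⟨h1, h2⟩
      have hvi : (v : ℕ) ≤ i := by
        by_contra hlt
        rw [prependPerm_succ] at h1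
        have hne : v ≠ i.succ := fun hh => Fin.succAbove_ne v (σ i) (h1.trans hh.symm)
        refine no_early_fixed _ h.zero 0 i.succ (by simp) (by rw [prependPerm_succ, h1]) ?_
        rw [prependPerm_zero, Fin.lt_def]
        rw [Ne, Fin.ext_iff] at hne
        simp only [Fin.val_succ] at hne ⊢
        omega
      refine ⟨?_, hvi⟩
      rw [prependPerm_succ, Fin.ext_iff, succAbove_val, Fin.val_succ] at h1
      rw [Fin.ext_iff]
      split_ifs at h1 <;> omega
    · rintro ⟨h1, h2⟩
      rw [prependPerm_succ, h1, Fin.ext_iff, succAbove_val, if_neg (by omega)]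
      simp only [Fin.val_succ, true_and]
      omega

/-! ### Recurrences for the enumerators -/

open Classical in
/-- Enumerator of the `Good j` permutations of `Fin n` by number of fixed points `≥ j`. -/
noncomputable def P (j n : ℕ) : ℤ[X] :=
  ∑ π : Equiv.Perm (Fin n), if Good j π then X ^ fpFrom j π else 0

lemma P_zero_right (j : ℕ) : P j 0 = 1 := by
  have h : ∀ π : Equiv.Perm (Fin 0), Good j π :=
    fun π => ⟨fun a => a.elim0, fun a => a.elim0⟩
  simp [P, h, fpFrom]

open Classical in
lemma sum_prepend_ge {n : ℕ} (j : ℕ) (v : Fin (n + 1)) (hv : j ≤ (v : ℕ)) :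
    (∑ σ : Equiv.Perm (Fin n), if Good j (prependPerm v σ) then
      (X : ℤ[X]) ^ fpFrom j (prependPerm v σ) else 0) =
    (if (v : ℕ) = 0 then X else 1) * P v n := by
  unfold P
  rw [Finset.mul_sum]
  refine Finset.sum_congr rfl fun σ _ => ?_
  by_cases hg : Good j (prependPerm v σ)
  · rw [if_pos hg, if_pos ((good_prepend_ge j v hv σ).1 hg), fpFrom_prepend_ge j v hv σ hg, pow_add]
    simp only [Fin.ext_iff, Fin.val_zero]
    split_ifs <;> simp
  · rw [if_neg hg, if_neg (fun h => hg ((good_prepend_ge j v hv σ).2 h)), mul_zero]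

lemma P_zero_succ (n : ℕ) :
    P 0 (n + 1) = X * P 0 n + ∑ v ∈ Finset.Ico 1 (n + 1), P v n := by
  conv_lhs => unfold P
  rw [sum_perm_succ]
  simp_rw [sum_prepend_ge 0 _ (Nat.zero_le _)]
  rw [Fin.sum_univ_eq_sum_range (fun v => (if v = 0 then X else 1) * P v n),
    Finset.range_eq_Ico, Finset.sum_eq_sum_Ico_succ_bot (Nat.succ_pos n)]
  congr 1
  refine Finset.sum_congr rfl fun v hv => ?_
  rw [Finset.mem_Ico] at hv
  rw [if_neg (by omega), one_mul]

lemma P_succ_succ (j n : ℕ) :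
    P (j + 1) (n + 1) = P j n + ∑ v ∈ Finset.Ico (j + 1) (n + 1), P v n := by
  classical
  conv_lhs => unfold P
  rw [sum_perm_succ]
  have hterm : ∀ v : Fin (n + 1), (∑ σ : Equiv.Perm (Fin n),
      if Good (j + 1) (prependPerm v σ) then
        (X : ℤ[X]) ^ fpFrom (j + 1) (prependPerm v σ) else 0) =
      (fun v : ℕ => (if v = 0 then P j n else 0) + if j + 1 ≤ v then P v n else 0) v := by
    intro v
    by_cases hv : j + 1 ≤ (v : ℕ)
    · rw [sum_prepend_ge _ _ hv]
      simp only
      rw [if_neg (by omega), if_neg (by omega), if_pos hv, one_mul, zero_add]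
    · simp only [if_neg hv, add_zero]
      by_cases h0 : v = 0
      · subst h0
        simp only [good_prepend_zero, fpFrom_prepend_zero, Fin.val_zero, if_true]
        unfold P
        exact Finset.sum_congr rfl fun σ _ => by congr
      · rw [if_neg (fun h : (v : ℕ) = 0 => h0 (Fin.ext h))]
        exact Finset.sum_eq_zero fun σ _ =>
          if_neg (not_good_prepend _ _ (by omega) h0 σ)
  rw [Finset.sum_congr rfl fun v _ => hterm v, Fin.sum_univ_eq_sum_range
    (fun v : ℕ => (if v = 0 then P j n else 0) + if j + 1 ≤ v then P v n else 0),
    Finset.sum_add_distrib, ← Finset.sum_filter (fun v => j + 1 ≤ v)]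
  congr 1
  · simp
  · refine Finset.sum_congr ?_ fun _ _ => rfl
    ext v
    simp only [Finset.mem_filter, Finset.mem_range, Finset.mem_Ico]
    omega

lemma P_diag (n : ℕ) : P n n = 1 := by
  induction n with
  | zero => exact P_zero_right 0
  | succ n ih => rw [P_succ_succ, ih]; simp

lemma P_rec_zero (n : ℕ) : P 0 (n + 1) = P 1 (n + 1) + (X - 1) * P 0 n := by
  rw [P_zero_succ, P_succ_succ]; ring

lemma P_rec_succ (j n : ℕ) (hj : j < n) :
    P (j + 1) (n + 1) = P (j + 2) (n + 1) + P j n := by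
  rw [P_succ_succ j, P_succ_succ (j + 1), Finset.sum_eq_sum_Ico_succ_bot (by omega)]
  ring

/-! ### Ballot numbers -/

/-- The ballot number `(k+1)/(n+1) * binom(2n-k, n)`, extended by `0` to `k > n`. -/
def N (k n : ℕ) : ℚ :=
  if k ≤ n then ((k : ℚ) + 1) / ((n : ℚ) + 1) * (Nat.choose (2 * n - k) n : ℚ) else 0

lemma N_diag (n : ℕ) : N n n = 1 := by
  have h : 2 * n - n = n := by omega
  have h' : (n : ℚ) + 1 ≠ 0 := by positivity
  simp [N, h, h']

lemma N_of_lt {k n : ℕ} (h : n < k) : N k n = 0 := if_neg (by omega)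

lemma N_zero (n : ℕ) : N 0 (n + 1) = N 1 (n + 1) := by
  have h2 : (Nat.choose (2 * n + 2) (n + 1) : ℚ) = 2 * Nat.choose (2 * n + 1) (n + 1) := by
    rw [Nat.choose_succ_succ' (2 * n + 1) n, ← Nat.choose_symm_half n]
    push_cast; ring
  simp only [N, if_pos (Nat.zero_le _), if_pos (Nat.le_add_left 1 n),
    show 2 * (n + 1) - 0 = 2 * n + 2 by omega, show 2 * (n + 1) - 1 = 2 * n + 1 by omega, h2]
  push_cast
  ring

lemma N_succ (k n : ℕ) : N (k + 1) (n + 1) = N (k + 2) (n + 1) + N k n := by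
  rcases lt_trichotomy k n with hk | rfl | hk
  · obtain ⟨m, rfl⟩ := Nat.exists_eq_add_of_lt hk
    simp only [N, if_pos (show k + 1 ≤ k + m + 1 + 1 by omega),
      if_pos (show k + 2 ≤ k + m + 1 + 1 by omega), if_pos (show k ≤ k + m + 1 by omega),
      show 2 * (k + m + 1 + 1) - (k + 1) = (k + 2 * m + 2) + 1 by omega,
      show 2 * (k + m + 1 + 1) - (k + 2) = k + 2 * m + 2 by omega,
      show 2 * (k + m + 1) - k = k + 2 * m + 2 by omega]
    rw [Nat.choose_succ_succ']
    have h := Nat.choose_succ_right_eq (k + 2 * m + 2) (k + m + 1)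
    rw [show k + 2 * m + 2 - (k + m + 1) = m + 1 by omega] at h
    have hq : (Nat.choose (k + 2 * m + 2) (k + m + 1 + 1) : ℚ) =
        Nat.choose (k + 2 * m + 2) (k + m + 1) * (m + 1) / (k + m + 2) := by
      rw [eq_div_iff (by positivity)]
      have := congrArg (Nat.cast : ℕ → ℚ) h
      push_cast at this
      linarith
    push_cast
    rw [hq]
    field_simp
    ring
  · rw [N_diag, N_diag, N_of_lt (by omega), zero_add]
  · rw [N_of_lt (by omega), N_of_lt (by omega), N_of_lt hk, zero_add]

/-! ### Comparison -/

/-- The coefficient of `(x-1)^k` in `P j n` is a ballot number. The bound `j ≤ n` is needed: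
`P j n = 1` for `j > n`, whereas `N j n = 0`. -/
lemma coeff_P (n : ℕ) : ∀ j ≤ n, ∀ k, ((((P j n).comp (X + 1)).coeff k : ℤ) : ℚ) = N (j + k) n := by
  induction n with
  | zero =>
    intro j hj k
    obtain rfl : j = 0 := by omega
    rw [P_zero_right, zero_add, one_comp, coeff_one]
    rcases Nat.eq_zero_or_pos k with rfl | hk
    · simp [N_diag]
    · rw [N_of_lt hk, if_neg (by omega)]; simp
  | succ n ih =>
    intro j hj
    induction hj using Nat.decreasingInduction with
    | self =>
      intro k
      rw [P_diag, one_comp, coeff_one]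
      rcases Nat.eq_zero_or_pos k with rfl | hk
      · simp [N_diag]
      · rw [N_of_lt (by omega), if_neg (by omega)]; simp
    | of_succ j hj ihj =>
      intro k
      cases j with
      | zero =>
        have h1 := ihj k
        rw [P_rec_zero, add_comp, mul_comp, coeff_add, Int.cast_add, h1]
        have hX : ((X : ℤ[X]) - 1).comp (X + 1) = X := by simp
        rw [hX]
        cases k with
        | zero => simp [N_zero]
        | succ k =>
          rw [coeff_X_mul, ih 0 (Nat.zero_le _), show 0 + 1 + (k + 1) = k + 2 by omega,
            show 0 + (k + 1) = k + 1 by omega, zero_add, N_succ k n]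
      | succ j =>
        rw [P_rec_succ j n (by omega), add_comp, coeff_add, Int.cast_add, ihj k,
          ih j (by omega) k, show j + 1 + k = (j + k) + 1 by omega, N_succ,
          show j + 1 + 1 + k = j + k + 2 by omega]

lemma good_zero_iff {n : ℕ} (π : Equiv.Perm (Fin n)) : Good 0 π ↔ AvoidsPat π ![2, 1, 0] := by
  unfold AvoidsPat ContainsPat
  constructor
  · rintro h ⟨f, hf, hp⟩
    exact h.1 (f 0) (f 1) (f 2) (hf (by decide)) (hf (by decide))
      ((hp 1 0).2 (by decide)) ((hp 2 1).2 (by decide))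
  · refine fun h => ⟨fun a b c hab hbc h1 h2 => h ⟨![a, b, c], ?_, ?_⟩, by simp⟩
    · intro x y hxy
      have := hab.trans hbc
      fin_cases x <;> fin_cases y <;> simp_all
    · intro x y
      have h3 := h2.trans h1
      fin_cases x <;> fin_cases y <;> simp [h1, h2, h3, h1.le, h2.le, h3.le]

lemma APoly_eq (n : ℕ) : APoly n = P 0 n := by
  classical
  unfold APoly P
  refine Finset.sum_congr rfl fun π _ => ?_
  have h : fpCount π = fpFrom 0 π := by
    simp [fpCount, fpFrom, Fintype.card_subtype]
  rw [h]
  exact if_congr (good_zero_iff π).symm rfl rfl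

end FixedPoints321

/-- Closed form `b(n,k) = ((k+1)/(n+1)) * binom(2n-k, n)`. -/
theorem bCoef_closed_form (n k : ℕ) (hn : 1 ≤ n) (hk : k ≤ n) :
    (bCoef n k : ℚ) = ((k : ℚ) + 1) / ((n : ℚ) + 1) * (Nat.choose (2 * n - k) n : ℚ) := by
  rw [bCoef, FixedPoints321.APoly_eq, FixedPoints321.coeff_P n 0 (Nat.zero_le n) k, zero_add,
    FixedPoints321.N, if_pos hk]
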